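/- arXiv:1909.11027 — 2 statements merged into one kernel-verified Lean document; each statement's English description precedes it below -/
import Mathlib

section
/- Let μ be a permuton. Suppose that for (μ⊗μ)-almost every pair of points ((x_1,y_1),(x_2,y_2)) ∈ ([0,1]²)² with x_1 < x_2 and y_2 < y_1, the quantities a_{ij} = μ([x_{i−1},x_i]×[t_{j−1},t_j]) for i,j ∈ {1,2,3} (where x_0 = t_0 = 0, x_3 = t_3 = 1, t_1 = y_2, t_2 = y_1) satisfy a_{22}(a_{11} + a_{13} + a_{31} + a_{33}) − (a_{21} + a_{23})(a_{12} + a_{32}) = 0. Then μ([x_1,x_2]×[y_2,y_1]) = (x_2−x_1)(y_1−y_2) for all points (x_1,y_1),(x_2,y_2) ∈ supp μ with x_1 ≤ x_2 and y_2 ≤ y_1. -/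
open MeasureTheory Filter

noncomputable section

/-- A permuton: a Borel probability measure on `ℝ × ℝ` (supported on `[0,1]²`)
with uniform marginals. -/
def IsPermuton (μ : Measure (ℝ × ℝ)) : Prop :=
  IsProbabilityMeasure μ ∧
    (∀ x x' : ℝ, 0 ≤ x → x ≤ x' → x' ≤ 1 →
      μ (Set.Icc x x' ×ˢ Set.Icc (0 : ℝ) 1) = ENNReal.ofReal (x' - x)) ∧
    (∀ y y' : ℝ, 0 ≤ y → y ≤ y' → y' ≤ 1 →
      μ (Set.Icc (0 : ℝ) 1 ×ˢ Set.Icc y y') = ENNReal.ofReal (y' - y))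

/-- The uniform permuton: two-dimensional Lebesgue measure on `[0,1]²`. -/
def uniformPermuton : Measure (ℝ × ℝ) :=
  volume.restrict (Set.Icc (0 : ℝ) 1 ×ˢ Set.Icc (0 : ℝ) 1)

/-- The support of a Borel measure: all points each of whose open neighbourhoods has
positive measure. -/
def measSupport (μ : Measure (ℝ × ℝ)) : Set (ℝ × ℝ) :=
  {p | ∀ U : Set (ℝ × ℝ), IsOpen U → p ∈ U → 0 < μ U}

/-- The pattern density of a `k`-permutation `π` in a measure `μ` on `ℝ × ℝ`:
the `μ^{⊗ k}`-probability that `k` sampled points, relabelled so that their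
`x`-coordinates increase, have `y`-coordinates ordered according to `π`. -/
def PermutonDensity {k : ℕ} (π : Equiv.Perm (Fin k)) (μ : Measure (ℝ × ℝ)) : ℝ :=
  ((Measure.pi fun _ : Fin k => μ)
    {p : Fin k → ℝ × ℝ | ∃ σ : Equiv.Perm (Fin k),
      StrictMono (fun i => (p (σ i)).1) ∧
        ∀ i j : Fin k, (p (σ i)).2 < (p (σ j)).2 ↔ π i < π j}).toReal

open scoped Classical in
/-- The pattern density of a `k`-permutation `π` in an `n`-permutation `Π`:
the proportion of `k`-element subsets of `Fin n` on which `Π` induces the pattern `π`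
(zero when `n < k`). -/
def PatternDensity {k n : ℕ} (π : Equiv.Perm (Fin k)) (Perm : Equiv.Perm (Fin n)) : ℝ :=
  ((Finset.univ.filter fun A : Finset (Fin n) =>
      ∃ h : A.card = k, ∀ i j : Fin k,
        Perm ↑(A.orderIsoOfFin h i) < Perm ↑(A.orderIsoOfFin h j) ↔ π i < π j).card : ℝ) /
    (n.choose k)

/-- A sequence of permutations (of varying orders) is quasirandom if the density of every
pattern `π` converges to `1/|π|!`. -/
def Quasirandom (P : ℕ → (n : ℕ) × Equiv.Perm (Fin n)) : Prop :=
  ∀ (k : ℕ) (π : Equiv.Perm (Fin k)),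
    Tendsto (fun i => PatternDensity π (P i).2) atTop (nhds (1 / (Nat.factorial k : ℝ)))

/-- A set `S` of `k`-permutations is `Σ`-forcing if a sequence of permutations is quasirandom
exactly when the sum of the densities of the patterns from `S` converges to `|S|/k!`. -/
def SigmaForcing {k : ℕ} (S : Finset (Equiv.Perm (Fin k))) : Prop :=
  ∀ P : ℕ → (n : ℕ) × Equiv.Perm (Fin n),
    Quasirandom P ↔
      Tendsto (fun i => ∑ π ∈ S, PatternDensity π (P i).2) atTop
        (nhds ((S.card : ℝ) / (Nat.factorial k : ℝ)))

/-- The `4`-permutation written in one-line notation as `(a+1)(b+1)(c+1)(d+1)`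
(inputs are 0-indexed). -/
def mk4 (a b c d : Fin 4) (h : Function.Bijective ![a, b, c, d] := by decide) :
    Equiv.Perm (Fin 4) :=
  Equiv.ofBijective _ h

/-- A doubly stochastic matrix: non-negative entries, all row and column sums equal to one. -/
def IsDoublyStochastic {n : ℕ} (A : Matrix (Fin n) (Fin n) ℝ) : Prop :=
  (∀ i j, 0 ≤ A i j) ∧ (∀ i, ∑ j, A i j = 1) ∧ (∀ j, ∑ i, A i j = 1)

/-- The step permuton `μ[A]` associated with an `n × n` doubly stochastic matrix `A`. -/
def stepPermuton {n : ℕ} (A : Matrix (Fin n) (Fin n) ℝ) : Measure (ℝ × ℝ) :=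
  ∑ i : Fin n, ∑ j : Fin n,
    ENNReal.ofReal (A i j * n) •
      volume.restrict
        (Set.Ico ((i : ℝ) / n) (((i : ℝ) + 1) / n) ×ˢ
          Set.Ico ((j : ℝ) / n) (((j : ℝ) + 1) / n))

/-- The matrix `B^{ij}` (0-indexed: `p, q ∈ [n-1]`): `+1` at positions `(p,q)` and
`(p+1,q+1)`, `-1` at positions `(p,q+1)` and `(p+1,q)`, `0` elsewhere. -/
def Bmat (n : ℕ) (p q : Fin (n - 1)) : Matrix (Fin n) (Fin n) ℝ := fun a b =>
  (if (a : ℕ) = (p : ℕ) ∧ (b : ℕ) = (q : ℕ) then 1 else 0) +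
    (if (a : ℕ) = (p : ℕ) + 1 ∧ (b : ℕ) = (q : ℕ) + 1 then 1 else 0) -
    (if (a : ℕ) = (p : ℕ) ∧ (b : ℕ) = (q : ℕ) + 1 then 1 else 0) -
    (if (a : ℕ) = (p : ℕ) + 1 ∧ (b : ℕ) = (q : ℕ) then 1 else 0)

/-- The matrix `A + ∑_{i,j} x_{ij} B^{ij}` where `A` is the `n × n` matrix with all
entries `1/n`. -/
def pertMatrix (n : ℕ) (x : Fin (n - 1) × Fin (n - 1) → ℝ) : Matrix (Fin n) (Fin n) ℝ :=
  fun a b => 1 / n + ∑ p : Fin (n - 1) × Fin (n - 1), x p * Bmat n p.1 p.2 a b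

/-- The function `h_{S,n}`: the sum over `π ∈ S` of the pattern density of `π` in the
step permuton of the perturbed matrix. -/
def hSN (n : ℕ) (S : Finset (Equiv.Perm (Fin 4))) (x : Fin (n - 1) × Fin (n - 1) → ℝ) : ℝ :=
  ∑ π ∈ S, PermutonDensity π (stepPermuton (pertMatrix n x))

open scoped Classical in
/-- The cover matrix of a set `S` of `4`-permutations: `C i j` is the number of `π ∈ S`
with `π j = i`. -/
def coverMatrix (S : Finset (Equiv.Perm (Fin 4))) : Fin 4 → Fin 4 → ℕ := fun i j =>
  (S.filter fun π => π j = i).card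

/-- The eight symmetry operations on `4`-permutations. -/
def symOps : List (Equiv.Perm (Fin 4) → Equiv.Perm (Fin 4)) :=
  [fun σ => σ,
   fun σ => σ * Fin.revPerm,
   fun σ => Fin.revPerm * σ,
   fun σ => Fin.revPerm * σ * Fin.revPerm,
   fun σ => σ⁻¹,
   fun σ => σ⁻¹ * Fin.revPerm,
   fun σ => Fin.revPerm * σ⁻¹,
   fun σ => Fin.revPerm * σ⁻¹ * Fin.revPerm]

open scoped Classical in
/-- `T` is symmetric to `S` if one of the eight symmetry operations maps `S` onto `T`. -/
def SymmetricSets (S T : Finset (Equiv.Perm (Fin 4))) : Prop :=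
  ∃ op ∈ symOps, T = S.image op

end

namespace St6

lemma sq_null {μ : Measure (ℝ × ℝ)} (hμ : IsPermuton μ) :
    μ (Set.Icc (0:ℝ) 1 ×ˢ Set.Icc (0:ℝ) 1)ᶜ = 0 := by
  obtain ⟨h1, h2, -⟩ := hμ
  rw [prob_compl_eq_zero_iff (measurableSet_Icc.prod measurableSet_Icc), h2 0 1 le_rfl zero_le_one le_rfl]
  simp

lemma stripX {μ : Measure (ℝ × ℝ)} (hμ : IsPermuton μ) (a b : ℝ) (hab : a ≤ b) (A : Set ℝ) :
    μ.real (Set.Icc a b ×ˢ A) ≤ b - a := by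
  have := hμ.1
  have h1 : μ (Set.Icc a b ×ˢ A) ≤ ENNReal.ofReal (b - a) := by
    by_cases hc : max a 0 ≤ min b 1
    · calc μ (Set.Icc a b ×ˢ A)
          ≤ μ ((Set.Icc (max a 0) (min b 1) ×ˢ Set.Icc (0:ℝ) 1) ∪
            (Set.Icc (0:ℝ) 1 ×ˢ Set.Icc (0:ℝ) 1)ᶜ) := by
            apply measure_mono
            rintro ⟨x, y⟩ ⟨⟨h1, h2⟩, -⟩
            simp only [Set.mem_union, Set.mem_prod, Set.mem_Icc, Set.mem_compl_iff] at *
            by_cases h : (0 ≤ x ∧ x ≤ 1) ∧ 0 ≤ y ∧ y ≤ 1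
            · left; exact ⟨⟨max_le h1 h.1.1, le_min h2 h.1.2⟩, h.2⟩
            · right; exact h
        _ ≤ _ := measure_union_le _ _
        _ = ENNReal.ofReal (min b 1 - max a 0) := by
            rw [sq_null hμ, hμ.2.1 _ _ (le_max_right _ _) hc (min_le_right _ _), add_zero]
        _ ≤ _ := ENNReal.ofReal_le_ofReal (sub_le_sub (min_le_left _ _) (le_max_left _ _))
    · have : μ (Set.Icc a b ×ˢ A) ≤ μ (Set.Icc (0:ℝ) 1 ×ˢ Set.Icc (0:ℝ) 1)ᶜ := by
        apply measure_mono
        rintro ⟨x, y⟩ ⟨⟨h1, h2⟩, -⟩ ⟨⟨h3, h4⟩, -⟩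
        exact hc ((max_le h1 h3).trans (le_min h2 h4))
      rw [sq_null hμ] at this
      exact this.trans zero_le
  exact ENNReal.toReal_le_of_le_ofReal (by linarith) h1

lemma stripY {μ : Measure (ℝ × ℝ)} (hμ : IsPermuton μ) (a b : ℝ) (hab : a ≤ b) (A : Set ℝ) :
    μ.real (A ×ˢ Set.Icc a b) ≤ b - a := by
  have := hμ.1
  have h1 : μ (A ×ˢ Set.Icc a b) ≤ ENNReal.ofReal (b - a) := by
    by_cases hc : max a 0 ≤ min b 1
    · calc μ (A ×ˢ Set.Icc a b)
          ≤ μ ((Set.Icc (0:ℝ) 1 ×ˢ Set.Icc (max a 0) (min b 1)) ∪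
            (Set.Icc (0:ℝ) 1 ×ˢ Set.Icc (0:ℝ) 1)ᶜ) := by
            apply measure_mono
            rintro ⟨x, y⟩ ⟨-, ⟨h1, h2⟩⟩
            simp only [Set.mem_union, Set.mem_prod, Set.mem_Icc, Set.mem_compl_iff] at *
            by_cases h : (0 ≤ x ∧ x ≤ 1) ∧ 0 ≤ y ∧ y ≤ 1
            · left; exact ⟨h.1, ⟨max_le h1 h.2.1, le_min h2 h.2.2⟩⟩
            · right; exact h
        _ ≤ _ := measure_union_le _ _
        _ = ENNReal.ofReal (min b 1 - max a 0) := by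
            rw [sq_null hμ, hμ.2.2 _ _ (le_max_right _ _) hc (min_le_right _ _), add_zero]
        _ ≤ _ := ENNReal.ofReal_le_ofReal (sub_le_sub (min_le_left _ _) (le_max_left _ _))
    · have : μ (A ×ˢ Set.Icc a b) ≤ μ (Set.Icc (0:ℝ) 1 ×ˢ Set.Icc (0:ℝ) 1)ᶜ := by
        apply measure_mono
        rintro ⟨x, y⟩ ⟨-, ⟨h1, h2⟩⟩ ⟨-, ⟨h3, h4⟩⟩
        exact hc ((max_le h1 h3).trans (le_min h2 h4))
      rw [sq_null hμ] at this
      exact this.trans zero_le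
  exact ENNReal.toReal_le_of_le_ofReal (by linarith) h1

lemma splitX {μ : Measure (ℝ × ℝ)} (hμ : IsPermuton μ) {a b c : ℝ} (hab : a ≤ b) (hbc : b ≤ c)
    {A : Set ℝ} (hA : MeasurableSet A) :
    μ.real (Set.Icc a b ×ˢ A) + μ.real (Set.Icc b c ×ˢ A) = μ.real (Set.Icc a c ×ˢ A) := by
  have := hμ.1
  have h := measureReal_union_add_inter (μ := μ) (s := Set.Icc a b ×ˢ A)
    (t := Set.Icc b c ×ˢ A) (measurableSet_Icc.prod hA)
  rw [← Set.union_prod, ← Set.inter_prod, Set.Icc_union_Icc_eq_Icc hab hbc,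
    Set.Icc_inter_Icc_eq_singleton hab hbc, ← Set.Icc_self] at h
  have h2 := stripX hμ b b le_rfl A
  have h3 := measureReal_nonneg (μ := μ) (s := Set.Icc b b ×ˢ A)
  linarith

lemma splitY {μ : Measure (ℝ × ℝ)} (hμ : IsPermuton μ) {a b c : ℝ} (hab : a ≤ b) (hbc : b ≤ c)
    {A : Set ℝ} (hA : MeasurableSet A) :
    μ.real (A ×ˢ Set.Icc a b) + μ.real (A ×ˢ Set.Icc b c) = μ.real (A ×ˢ Set.Icc a c) := by
  have := hμ.1
  have h := measureReal_union_add_inter (μ := μ) (s := A ×ˢ Set.Icc a b)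
    (t := A ×ˢ Set.Icc b c) (hA.prod measurableSet_Icc)
  rw [← Set.prod_union, ← Set.prod_inter, Set.Icc_union_Icc_eq_Icc hab hbc,
    Set.Icc_inter_Icc_eq_singleton hab hbc, ← Set.Icc_self] at h
  have h2 := stripY hμ b b le_rfl A
  have h3 := measureReal_nonneg (μ := μ) (s := A ×ˢ Set.Icc b b)
  linarith

lemma algebra {μ : Measure (ℝ × ℝ)} (hμ : IsPermuton μ) {x x' y y' : ℝ}
    (hx0 : 0 ≤ x) (hx : x ≤ x') (hx1 : x' ≤ 1) (hy0 : 0 ≤ y) (hy : y ≤ y') (hy1 : y' ≤ 1)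
    (h : ∀ a : Fin 3 → Fin 3 → ℝ,
        (∀ i j : Fin 3, a i j =
          (μ (Set.Icc (![0, x, x', 1] i.castSucc) (![0, x, x', 1] i.succ) ×ˢ
              Set.Icc (![0, y, y', 1] j.castSucc)
                (![0, y, y', 1] j.succ))).toReal) →
        a 1 1 * (a 0 0 + a 0 2 + a 2 0 + a 2 2) -
          (a 1 0 + a 1 2) * (a 0 1 + a 2 1) = 0) :
    μ.real (Set.Icc x x' ×ˢ Set.Icc y y') = (x' - x) * (y' - y) := by
  have h := h _ (fun i j => rfl)
  simp only [← measureReal_def] at h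
  change μ.real (Set.Icc x x' ×ˢ Set.Icc y y') *
    (μ.real (Set.Icc 0 x ×ˢ Set.Icc 0 y) + μ.real (Set.Icc 0 x ×ˢ Set.Icc y' 1) +
      μ.real (Set.Icc x' 1 ×ˢ Set.Icc 0 y) + μ.real (Set.Icc x' 1 ×ˢ Set.Icc y' 1)) -
    (μ.real (Set.Icc x x' ×ˢ Set.Icc 0 y) + μ.real (Set.Icc x x' ×ˢ Set.Icc y' 1)) *
    (μ.real (Set.Icc 0 x ×ˢ Set.Icc y y') + μ.real (Set.Icc x' 1 ×ˢ Set.Icc y y')) = 0 at h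
  have col : ∀ u v : ℝ, 0 ≤ u → u ≤ v → v ≤ 1 →
      μ.real (Set.Icc u v ×ˢ Set.Icc 0 y) + μ.real (Set.Icc u v ×ˢ Set.Icc y y') +
        μ.real (Set.Icc u v ×ˢ Set.Icc y' 1) = v - u := by
    intro u v hu huv hv
    rw [splitY hμ hy0 hy measurableSet_Icc, splitY hμ (hy0.trans hy) hy1 measurableSet_Icc,
      measureReal_def, hμ.2.1 u v hu huv hv, ENNReal.toReal_ofReal (by linarith)]
  have row : μ.real (Set.Icc 0 x ×ˢ Set.Icc y y') + μ.real (Set.Icc x x' ×ˢ Set.Icc y y') +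
        μ.real (Set.Icc x' 1 ×ˢ Set.Icc y y') = y' - y := by
    rw [splitX hμ hx0 hx measurableSet_Icc, splitX hμ (hx0.trans hx) hx1 measurableSet_Icc,
      measureReal_def, hμ.2.2 y y' hy0 hy hy1, ENNReal.toReal_ofReal (by linarith)]
  have c1 := col 0 x le_rfl hx0 (hx.trans hx1)
  have c2 := col x x' hx0 hx hx1
  have c3 := col x' 1 (hx0.trans hx) hx1 le_rfl
  generalize μ.real (Set.Icc x x' ×ˢ Set.Icc y y') = m at *
  have e1 : μ.real (Set.Icc x x' ×ˢ Set.Icc 0 y) + μ.real (Set.Icc x x' ×ˢ Set.Icc y' 1)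
    = x' - x - m := by linarith
  have e2 : μ.real (Set.Icc 0 x ×ˢ Set.Icc y y') + μ.real (Set.Icc x' 1 ×ˢ Set.Icc y y')
    = y' - y - m := by linarith
  have e3 : μ.real (Set.Icc 0 x ×ˢ Set.Icc 0 y) + μ.real (Set.Icc 0 x ×ˢ Set.Icc y' 1) +
      μ.real (Set.Icc x' 1 ×ˢ Set.Icc 0 y) + μ.real (Set.Icc x' 1 ×ˢ Set.Icc y' 1)
    = 1 - (x' - x) - (y' - y) + m := by linarith
  rw [e1, e2, e3] at h
  linarith

lemma near {μ : Measure (ℝ × ℝ)} (hμ : IsPermuton μ) {x x' y y' u u' v v' ε : ℝ} (hε : 0 ≤ ε)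
    (h1 : u ≤ x + ε) (h2 : x' - ε ≤ u') (h3 : v ≤ y + ε) (h4 : y' - ε ≤ v') :
    μ.real (Set.Icc x x' ×ˢ Set.Icc y y') ≤ μ.real (Set.Icc u u' ×ˢ Set.Icc v v') + 4 * ε := by
  have := hμ.1
  have hs : Set.Icc x x' ×ˢ Set.Icc y y' ⊆ Set.Icc u u' ×ˢ Set.Icc v v' ∪
      (Set.Icc x (x + ε) ×ˢ Set.univ) ∪ (Set.Icc (x' - ε) x' ×ˢ Set.univ) ∪
      (Set.univ ×ˢ Set.Icc y (y + ε)) ∪ (Set.univ ×ˢ Set.Icc (y' - ε) y') := by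
    rintro ⟨s, t⟩ ⟨⟨a1, a2⟩, ⟨a3, a4⟩⟩
    simp only [Set.mem_union, Set.mem_prod, Set.mem_Icc, Set.mem_univ, true_and, and_true] at *
    by_cases b1 : s ≤ x + ε
    · tauto
    by_cases b2 : x' - ε ≤ s
    · tauto
    by_cases b3 : t ≤ y + ε
    · tauto
    by_cases b4 : y' - ε ≤ t
    · tauto
    push Not at b1 b2 b3 b4
    refine Or.inl (Or.inl (Or.inl (Or.inl ⟨⟨?_, ?_⟩, ⟨?_, ?_⟩⟩))) <;> linarith
  have k0 := measureReal_mono (μ := μ) hs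
  have k1 := stripX hμ x (x + ε) (by linarith) Set.univ
  have k2 := stripX hμ (x' - ε) x' (by linarith) Set.univ
  have k3 := stripY hμ y (y + ε) (by linarith) Set.univ
  have k4 := stripY hμ (y' - ε) y' (by linarith) Set.univ
  refine k0.trans ?_
  refine (measureReal_union_le _ _).trans ?_
  refine (add_le_add_left (measureReal_union_le _ _) _).trans ?_
  refine (add_le_add_left (add_le_add_left (measureReal_union_le _ _) _) _).trans ?_
  refine (add_le_add_left (add_le_add_left (add_le_add_left
    (measureReal_union_le _ _) _) _) _).trans ?_
  linarith

lemma supp_sq {μ : Measure (ℝ × ℝ)} (hμ : IsPermuton μ) {p : ℝ × ℝ} (hp : p ∈ measSupport μ) :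
    p ∈ Set.Icc (0:ℝ) 1 ×ˢ Set.Icc (0:ℝ) 1 := by
  by_contra hc
  have := hp _ (isClosed_Icc.prod isClosed_Icc).isOpen_compl hc
  rw [sq_null hμ] at this
  exact lt_irrefl _ this

end St6

theorem statement_6 (μ : Measure (ℝ × ℝ)) (hμ : IsPermuton μ)
    (h : ∀ᵐ pq ∂(μ.prod μ), pq.1.1 < pq.2.1 → pq.2.2 < pq.1.2 →
      ∀ a : Fin 3 → Fin 3 → ℝ,
        (∀ i j : Fin 3, a i j =
          (μ (Set.Icc (![0, pq.1.1, pq.2.1, 1] i.castSucc) (![0, pq.1.1, pq.2.1, 1] i.succ) ×ˢ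
              Set.Icc (![0, pq.2.2, pq.1.2, 1] j.castSucc)
                (![0, pq.2.2, pq.1.2, 1] j.succ))).toReal) →
        a 1 1 * (a 0 0 + a 0 2 + a 2 0 + a 2 2) -
          (a 1 0 + a 1 2) * (a 0 1 + a 2 1) = 0) :
    ∀ p ∈ measSupport μ, ∀ q ∈ measSupport μ, p.1 ≤ q.1 → q.2 ≤ p.2 →
      μ (Set.Icc p.1 q.1 ×ˢ Set.Icc q.2 p.2) =
        ENNReal.ofReal ((q.1 - p.1) * (p.2 - q.2)) := by
  have := hμ.1
  intro p hp q hq hpq1 hqp2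
  obtain ⟨⟨p1, p2⟩, ⟨p3, p4⟩⟩ := St6.supp_sq hμ hp
  obtain ⟨⟨q1, q2⟩, ⟨q3, q4⟩⟩ := St6.supp_sq hμ hq
  suffices H : μ.real (Set.Icc p.1 q.1 ×ˢ Set.Icc q.2 p.2) = (q.1 - p.1) * (p.2 - q.2) by
    rw [← H, ofReal_measureReal]
  rcases hpq1.eq_or_lt with he | hlt1
  · have h1 := St6.stripX hμ p.1 q.1 hpq1 (Set.Icc q.2 p.2)
    have h2 := measureReal_nonneg (μ := μ) (s := Set.Icc p.1 q.1 ×ˢ Set.Icc q.2 p.2)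
    rw [← he] at h1 h2 ⊢
    linarith
  rcases hqp2.eq_or_lt with he | hlt2
  · have h1 := St6.stripY hμ q.2 p.2 hqp2 (Set.Icc p.1 q.1)
    have h2 := measureReal_nonneg (μ := μ) (s := Set.Icc p.1 q.1 ×ˢ Set.Icc q.2 p.2)
    rw [← he] at h1 h2 ⊢
    linarith
  have key : ∀ ε : ℝ, 0 < ε → ε < (q.1 - p.1) / 2 → ε < (p.2 - q.2) / 2 →
      |μ.real (Set.Icc p.1 q.1 ×ˢ Set.Icc q.2 p.2) - (q.1 - p.1) * (p.2 - q.2)| ≤ 8 * ε := by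
    intro ε hε he1 he2
    have hpos : (μ.prod μ) (Metric.ball p ε ×ˢ Metric.ball q ε) ≠ 0 := by
      rw [Measure.prod_prod]
      exact mul_ne_zero (hp _ Metric.isOpen_ball (Metric.mem_ball_self hε)).ne'
        (hq _ Metric.isOpen_ball (Metric.mem_ball_self hε)).ne'
    have hsq : ∀ᵐ z ∂μ, z ∈ Set.Icc (0:ℝ) 1 ×ˢ Set.Icc (0:ℝ) 1 := St6.sq_null hμ
    have ha := Measure.quasiMeasurePreserving_fst (μ := μ) (ν := μ) |>.ae hsq
    have hb := Measure.quasiMeasurePreserving_snd (μ := μ) (ν := μ) |>.ae hsq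
    have hfr : ∃ᵐ z ∂(μ.prod μ), z ∈ Metric.ball p ε ×ˢ Metric.ball q ε :=
      frequently_ae_mem_iff.2 hpos
    obtain ⟨⟨r, s⟩, ⟨hr, hs⟩, hH, ⟨⟨r1, r2⟩, ⟨r3, r4⟩⟩, ⟨⟨s1, s2⟩, ⟨s3, s4⟩⟩⟩ :=
      (hfr.and_eventually (h.and (ha.and hb))).exists
    dsimp only at *
    rw [Metric.mem_ball, Prod.dist_eq, max_lt_iff, Real.dist_eq, Real.dist_eq, abs_lt, abs_lt]
      at hr hs
    obtain ⟨⟨a1, a2⟩, ⟨a3, a4⟩⟩ := hr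
    obtain ⟨⟨b1, b2⟩, ⟨b3, b4⟩⟩ := hs
    have hx : r.1 < s.1 := by linarith
    have hy : s.2 < r.2 := by linarith
    have e := St6.algebra hμ r1 hx.le s2 s3 hy.le r4 (hH hx hy)
    have n1 := St6.near hμ (x := p.1) (x' := q.1) (y := q.2) (y' := p.2) (u := r.1) (u' := s.1)
      (v := s.2) (v' := r.2) hε.le (by linarith) (by linarith) (by linarith) (by linarith)
    have n2 := St6.near hμ (u := p.1) (u' := q.1) (v := q.2) (v' := p.2) (x := r.1) (x' := s.1)
      (y := s.2) (y' := r.2) hε.le (by linarith) (by linarith) (by linarith) (by linarith)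
    rw [e] at n1 n2
    rw [abs_le]
    constructor
    · nlinarith [mul_nonneg (show 0 ≤ s.1 - r.1 by linarith)
        (show 0 ≤ 2 * ε - ((p.2 - q.2) - (r.2 - s.2)) by linarith),
        mul_nonneg (show 0 ≤ p.2 - q.2 by linarith)
        (show 0 ≤ 2 * ε - ((q.1 - p.1) - (s.1 - r.1)) by linarith),
        mul_nonneg hε.le (show 0 ≤ 1 - (s.1 - r.1) by linarith),
        mul_nonneg hε.le (show 0 ≤ 1 - (p.2 - q.2) by linarith)]
    · nlinarith [mul_nonneg (show 0 ≤ s.1 - r.1 by linarith)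
        (show 0 ≤ 2 * ε + ((p.2 - q.2) - (r.2 - s.2)) by linarith),
        mul_nonneg (show 0 ≤ p.2 - q.2 by linarith)
        (show 0 ≤ 2 * ε + ((q.1 - p.1) - (s.1 - r.1)) by linarith),
        mul_nonneg hε.le (show 0 ≤ 1 - (s.1 - r.1) by linarith),
        mul_nonneg hε.le (show 0 ≤ 1 - (p.2 - q.2) by linarith)]
  by_contra hne
  have hD : 0 < |μ.real (Set.Icc p.1 q.1 ×ˢ Set.Icc q.2 p.2) - (q.1 - p.1) * (p.2 - q.2)| :=
    abs_pos.2 (sub_ne_zero.2 hne)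
  obtain ⟨ε, h0, hlt⟩ := exists_between (lt_min (div_pos hD (show (0:ℝ) < 8 by norm_num))
    (lt_min (show 0 < (q.1 - p.1) / 2 by linarith) (show 0 < (p.2 - q.2) / 2 by linarith)))
  rw [lt_min_iff, lt_min_iff] at hlt
  have := key ε h0 hlt.2.1 hlt.2.2
  linarith [hlt.1]
end

section
/- Let S = {1234, 1243, 2134, 2143, 3412, 3421, 4312, 4321}. For every permuton μ it holds that Σ_{π∈S} d(π,μ) ≥ 1/3, and equality holds if and only if μ is the uniform permuton. -/
open MeasureTheory Filter

open MeasureTheory Filter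

def gk {α β : Type*} [LT α] [LT β] [DecidableLT α] [DecidableLT β] (x : Fin 4 → α) (y : Fin 4 → β) : ℤ :=
  12 * (if x 2 < x 0 ∧ y 2 < y 0 ∧ x 3 < x 0 ∧ y 3 < y 0 then 1 else 0)
   - 24 * (if x 1 < x 0 ∧ y 1 < y 0 ∧ x 2 < x 0 ∧ y 3 < y 0 then 1 else 0)
   + 24 * (if x 2 < x 0 ∧ y 2 < y 1 ∧ x 3 < x 0 ∧ y 3 < y 1 then 1 else 0) - 1

noncomputable def SS : Finset (Equiv.Perm (Fin 4)) := {
        mk4 0 1 2 3,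
        mk4 0 1 3 2,
        mk4 1 0 2 3,
        mk4 1 0 3 2,
        mk4 2 3 0 1,
        mk4 2 3 1 0,
        mk4 3 2 0 1,
        mk4 3 2 1 0}

theorem comb : ∀ τ : Equiv.Perm (Fin 4),
    ∑ σ : Equiv.Perm (Fin 4), gk (fun i => σ i) (fun i => τ (σ i)) =
      24 * (if τ ∈ SS then 1 else 0) := by
  decide +kernel

def EE {k : ℕ} (π : Equiv.Perm (Fin k)) : Set (Fin k → ℝ × ℝ) :=
  {p : Fin k → ℝ × ℝ | ∃ σ : Equiv.Perm (Fin k),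
      StrictMono (fun i => (p (σ i)).1) ∧
        ∀ i j : Fin k, (p (σ i)).2 < (p (σ j)).2 ↔ π i < π j}

theorem exists_sort (y : Fin 4 → ℝ) (hy : Function.Injective y) :
    ∃ σ : Equiv.Perm (Fin 4), StrictMono (fun i => y (σ i)) :=
  ⟨Tuple.sort y, (Tuple.monotone_sort y).strictMono_of_injective
    (hy.comp (Tuple.sort y).injective)⟩

theorem perm_eq_of_lt (π τ : Equiv.Perm (Fin 4)) (h : ∀ i j, τ i < τ j ↔ π i < π j) : π = τ := by
  revert π τ
  decide +kernel

theorem sigma_unique (x : Fin 4 → ℝ) (σ σ' : Equiv.Perm (Fin 4))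
    (h : StrictMono (fun i => x (σ i))) (h' : StrictMono (fun i => x (σ' i))) : σ = σ' := by
  have key : ∀ i j, σ⁻¹ i < σ⁻¹ j ↔ σ'⁻¹ i < σ'⁻¹ j := by
    intro i j
    have h1 := h.lt_iff_lt (a := σ⁻¹ i) (b := σ⁻¹ j)
    have h2 := h'.lt_iff_lt (a := σ'⁻¹ i) (b := σ'⁻¹ j)
    simp at h1 h2
    exact h1.symm.trans h2
  exact (inv_injective (perm_eq_of_lt _ _ key)).symm

theorem gk_congr {α β γ δ : Type*} [LT α] [LT β] [DecidableLT α] [DecidableLT β]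
    [LT γ] [LT δ] [DecidableLT γ] [DecidableLT δ]
    (x : Fin 4 → α) (y : Fin 4 → β) (x' : Fin 4 → γ) (y' : Fin 4 → δ)
    (hx : ∀ i j, x i < x j ↔ x' i < x' j) (hy : ∀ i j, y i < y j ↔ y' i < y' j) :
    gk x y = gk x' y' := by
  simp only [gk, hx, hy]

open scoped Classical in
theorem pointwise (p : Fin 4 → ℝ × ℝ) (hx : Function.Injective fun i => (p i).1)
    (hy : Function.Injective fun i => (p i).2) :
    ∑ σ : Equiv.Perm (Fin 4), (gk (fun i => (p (σ i)).1) (fun i => (p (σ i)).2) : ℝ) =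
      24 * ∑ π ∈ SS, (EE π).indicator 1 p := by
  obtain ⟨σ₀, h₀⟩ := exists_sort _ hx
  obtain ⟨ρ, hρ⟩ := exists_sort (fun i => (p (σ₀ i)).2) (hy.comp σ₀.injective)
  have hτ : ∀ i j, (p (σ₀ i)).2 < (p (σ₀ j)).2 ↔ ρ⁻¹ i < ρ⁻¹ j := by
    intro i j
    have := hρ.lt_iff_lt (a := ρ⁻¹ i) (b := ρ⁻¹ j)
    simpa using this
  have hE : ∀ π, p ∈ EE π ↔ π = ρ⁻¹ := by
    intro π
    constructor
    · rintro ⟨σ, h1, h2⟩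
      have := sigma_unique (fun i => (p i).1) _ _ h1 h₀
      subst this
      exact perm_eq_of_lt _ _ fun i j => by rw [← hτ, h2]
    · rintro rfl
      exact ⟨σ₀, h₀, hτ⟩
  have e1 : ∑ π ∈ SS, (EE π).indicator (1 : (Fin 4 → ℝ × ℝ) → ℝ) p = if ρ⁻¹ ∈ SS then 1 else 0 := by
    simp only [Set.indicator_apply, hE, Pi.one_apply]
    simp
  rw [e1, ← Equiv.sum_comp (Equiv.mulLeft σ₀)]
  have e2 := comb ρ⁻¹
  have e3 : ((∑ σ : Equiv.Perm (Fin 4), gk (fun i => σ i) (fun i => ρ⁻¹ (σ i)) : ℤ) : ℝ) =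
      24 * (if ρ⁻¹ ∈ SS then 1 else 0) := by
    rw [e2]; push_cast; rfl
  rw [← e3]
  push_cast
  refine Finset.sum_congr rfl fun σ _ => ?_
  congr 1
  apply gk_congr
  · intro i j
    exact h₀.lt_iff_lt
  · intro i j
    exact hτ _ _

noncomputable abbrev mm : Measure ℝ := volume.restrict (Set.Icc (0 : ℝ) 1)

instance mm_prob : IsProbabilityMeasure mm := ⟨by simp [mm]⟩

noncomputable def LL (t : ℝ) : ℝ := mm.real (Set.Iio t)

theorem LL_eq {t : ℝ} (h : t ∈ Set.Icc (0 : ℝ) 1) : LL t = t := by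
  have : Set.Iio t ∩ Set.Icc (0 : ℝ) 1 = Set.Ico 0 t := by
    ext x; simp only [Set.mem_inter_iff, Set.mem_Iio, Set.mem_Icc, Set.mem_Ico]
    constructor
    · rintro ⟨a, b, c⟩; exact ⟨b, a⟩
    · rintro ⟨a, b⟩; exact ⟨b, a, (b.le.trans h.2)⟩
  simp [LL, mm, measureReal_def, Measure.restrict_apply measurableSet_Iio, this, h.1]

theorem LL_mono : Monotone LL := fun _ _ h => measureReal_mono (Set.Iio_subset_Iio h)

theorem LL_meas : Measurable LL := LL_mono.measurable

theorem LL_nonneg (t : ℝ) : 0 ≤ LL t := measureReal_nonneg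
theorem LL_le (t : ℝ) : LL t ≤ 1 := measureReal_le_one

theorem ae_mm : ∀ᵐ t ∂mm, t ∈ Set.Icc (0 : ℝ) 1 := ae_restrict_mem measurableSet_Icc

theorem int_LL_sq : ∫ t, LL t ^ 2 ∂mm = 1 / 3 := by
  have : ∫ t, LL t ^ 2 ∂mm = ∫ t, t ^ 2 ∂mm := by
    apply integral_congr_ae
    filter_upwards [ae_mm] with t ht
    rw [LL_eq ht]
  rw [this, mm, integral_Icc_eq_integral_Ioc, ← intervalIntegral.integral_of_le zero_le_one]
  simp; norm_num

theorem int_W {t : ℝ} (h : t ∈ Set.Icc (0 : ℝ) 1) :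
    ∫ x, (if t < x then LL x else 0) ∂mm = (1 - LL t ^ 2) / 2 := by
  have : ∫ x, (if t < x then LL x else 0) ∂mm = ∫ x in t..1, x := by
    rw [intervalIntegral.integral_of_le h.2, ← integral_indicator measurableSet_Ioc,
      ← integral_indicator measurableSet_Icc]
    congr 1
    ext x
    by_cases h1 : x ∈ Set.Icc (0 : ℝ) 1
    · rw [Set.indicator_of_mem h1, LL_eq h1]
      by_cases h2 : t < x
      · rw [if_pos h2, Set.indicator_of_mem (show x ∈ Set.Ioc t 1 from ⟨h2, h1.2⟩)]
      · rw [if_neg h2, Set.indicator_of_notMem (fun h => h2 h.1)]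
    · rw [Set.indicator_of_notMem h1, Set.indicator_of_notMem]
      exact fun h' => h1 ⟨h.1.trans h'.1.le, h'.2⟩
  rw [this, LL_eq h]
  simp

section perm
variable {μ : Measure (ℝ × ℝ)}

theorem IsPermuton.ae_mem (hμ : IsPermuton μ) :
    ∀ᵐ q ∂μ, q ∈ Set.Icc (0 : ℝ) 1 ×ˢ Set.Icc (0 : ℝ) 1 := by
  have := hμ.1
  have h := hμ.2.1 0 1 le_rfl zero_le_one le_rfl
  simp only [sub_zero, ENNReal.ofReal_one] at h
  exact (prob_compl_eq_zero_iff (measurableSet_Icc.prod measurableSet_Icc)).2 h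

theorem mm_Iic (a : ℝ) (h : 0 ≤ a) (h' : a ≤ 1) : mm (Set.Iic a) = ENNReal.ofReal a := by
  have : Set.Iic a ∩ Set.Icc (0 : ℝ) 1 = Set.Icc 0 a := by
    ext x; simp only [Set.mem_inter_iff, Set.mem_Iic, Set.mem_Icc]
    constructor
    · rintro ⟨a, b, c⟩; exact ⟨b, a⟩
    · rintro ⟨a, b⟩; exact ⟨b, a, (b.trans h')⟩
  simp [mm, Measure.restrict_apply measurableSet_Iic, this]

theorem eq_mm (ρ : Measure ℝ) [IsProbabilityMeasure ρ] (h : ∀ᵐ t ∂ρ, t ∈ Set.Icc (0 : ℝ) 1)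
    (h2 : ∀ a, 0 ≤ a → a ≤ 1 → ρ (Set.Icc 0 a) = ENNReal.ofReal a) : ρ = mm := by
  apply Measure.ext_of_Iic
  intro a
  rcases lt_or_ge a 0 with h0 | h0
  · have e : ∀ ρ : Measure ℝ, (∀ᵐ t ∂ρ, t ∈ Set.Icc (0 : ℝ) 1) → ρ (Set.Iic a) = 0 := by
      intro ρ hr
      apply measure_mono_null _ hr
      intro x hx hx'
      exact absurd (hx'.1.trans hx) (not_le.2 h0)
    rw [e _ h, e _ ae_mm]
  rcases le_or_gt a 1 with h1 | h1
  · rw [mm_Iic a h0 h1, ← h2 a h0 h1]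
    apply measure_congr
    filter_upwards [h] with t ht
    apply propext
    exact ⟨fun h => ⟨ht.1, h⟩, fun h => h.2⟩
  · have e : ∀ ρ : Measure ℝ, [IsProbabilityMeasure ρ] → (∀ᵐ t ∂ρ, t ∈ Set.Icc (0 : ℝ) 1) →
        ρ (Set.Iic a) = 1 := by
      intro ρ _ h
      rw [← measure_univ (μ := ρ)]
      apply measure_congr
      filter_upwards [h] with t ht
      apply propext
      exact ⟨fun _ => trivial, fun _ => ht.2.trans h1.le⟩
    rw [e _ h, e _ ae_mm]

theorem IsPermuton.map_fst (hμ : IsPermuton μ) : μ.map Prod.fst = mm := by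
  have := hμ.1
  have : IsProbabilityMeasure (μ.map Prod.fst) :=
    Measure.isProbabilityMeasure_map measurable_fst.aemeasurable
  apply eq_mm
  · refine (ae_map_iff measurable_fst.aemeasurable measurableSet_Icc).2 ?_
    filter_upwards [hμ.ae_mem] with q hq using hq.1
  · intro a h0 h1
    have := hμ.2.1 0 a le_rfl h0 h1
    rw [sub_zero] at this
    rw [← this, Measure.map_apply measurable_fst measurableSet_Icc]
    apply measure_congr
    filter_upwards [hμ.ae_mem] with q hq
    apply propext
    exact ⟨fun h => ⟨h, hq.2⟩, fun h => h.1⟩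

theorem IsPermuton.map_snd (hμ : IsPermuton μ) : μ.map Prod.snd = mm := by
  have := hμ.1
  have : IsProbabilityMeasure (μ.map Prod.snd) :=
    Measure.isProbabilityMeasure_map measurable_snd.aemeasurable
  apply eq_mm
  · refine (ae_map_iff measurable_snd.aemeasurable measurableSet_Icc).2 ?_
    filter_upwards [hμ.ae_mem] with q hq using hq.2
  · intro a h0 h1
    have := hμ.2.2 0 a le_rfl h0 h1
    rw [sub_zero] at this
    rw [← this, Measure.map_apply measurable_snd measurableSet_Icc]
    apply measure_congr
    filter_upwards [hμ.ae_mem] with q hq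
    apply propext
    exact ⟨fun h => ⟨hq.1, h⟩, fun h => h.2⟩

theorem pi_mm_ae : ∀ᵐ x ∂(Measure.pi fun _ : Fin 4 => mm), Function.Injective x := by
  have h1 : (Measure.pi fun _ : Fin 4 => mm) ≪ volume := by
    rw [mm, ← Measure.restrict_pi_pi]
    exact Measure.restrict_le_self.absolutelyContinuous
  apply h1.ae_le
  have : ∀ i j : Fin 4, i ≠ j → ∀ᵐ x : Fin 4 → ℝ, x i ≠ x j := by
    intro i j hij
    let f : (Fin 4 → ℝ) →ₗ[ℝ] ℝ :=
      (LinearMap.proj i : (Fin 4 → ℝ) →ₗ[ℝ] ℝ) - (LinearMap.proj j : (Fin 4 → ℝ) →ₗ[ℝ] ℝ)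
    have := Measure.addHaar_submodule (volume : Measure (Fin 4 → ℝ)) (LinearMap.ker f) (by
      intro h
      have : (Pi.single i 1 : Fin 4 → ℝ) ∈ LinearMap.ker f := h ▸ Submodule.mem_top
      simp [f, hij.symm] at this)
    apply measure_mono_null _ this
    intro x hx
    have hx : x i = x j := by simpa using hx
    simp [f, hx]
  have h2 : ∀ᵐ x : Fin 4 → ℝ, ∀ i j : Fin 4, i ≠ j → x i ≠ x j := by
    rw [ae_all_iff]; intro i
    rw [ae_all_iff]; intro j
    by_cases h : i = j
    · simp [h]
    · filter_upwards [this i j h] with x hx _ using hx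
  filter_upwards [h2] with x hx i j hij
  by_contra h
  exact hx i j h hij

theorem ae_inj [IsProbabilityMeasure μ] (f : ℝ × ℝ → ℝ) (hf : Measurable f) (h : μ.map f = mm) :
    ∀ᵐ p ∂(Measure.pi fun _ : Fin 4 => μ), Function.Injective fun i => f (p i) := by
  have : MeasurePreserving (fun (p : Fin 4 → ℝ × ℝ) i => f (p i)) (Measure.pi fun _ => μ)
    (Measure.pi fun _ => mm) := measurePreserving_pi _ _ (fun _ => ⟨hf, h⟩)
  exact this.quasiMeasurePreserving.ae pi_mm_ae

theorem pi_four [IsProbabilityMeasure μ] :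
    (Measure.pi fun _ : Fin 4 => μ) =
      ((μ.prod μ).prod (μ.prod μ)).map (fun q => ![q.1.1, q.1.2, q.2.1, q.2.2]) := by
  apply Measure.pi_eq
  intro s hs
  have hm : Measurable (fun q : ((ℝ × ℝ) × (ℝ × ℝ)) × ((ℝ × ℝ) × (ℝ × ℝ)) =>
      ![q.1.1, q.1.2, q.2.1, q.2.2]) := by
    rw [measurable_pi_iff]
    intro i
    fin_cases i <;> simp <;> fun_prop
  rw [Measure.map_apply hm (MeasurableSet.univ_pi hs)]
  have : (fun q : ((ℝ × ℝ) × (ℝ × ℝ)) × ((ℝ × ℝ) × (ℝ × ℝ)) =>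
      ![q.1.1, q.1.2, q.2.1, q.2.2]) ⁻¹' (Set.univ.pi s) =
      (s 0 ×ˢ s 1) ×ˢ (s 2 ×ˢ s 3) := by
    ext q
    simp [Set.mem_pi, Fin.forall_fin_succ, and_assoc]
  rw [this, Measure.prod_prod, Measure.prod_prod, Measure.prod_prod, Fin.prod_univ_four]
  ring

theorem pi_perm [IsProbabilityMeasure μ] (σ : Equiv.Perm (Fin 4)) :
    MeasurePreserving (fun p i => p (σ i)) (Measure.pi fun _ : Fin 4 => μ)
      (Measure.pi fun _ : Fin 4 => μ) := by
  have hm : Measurable (fun (p : Fin 4 → ℝ × ℝ) i => p (σ i)) := by fun_prop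
  refine ⟨hm, (Measure.pi_eq ?_).symm⟩
  intro s hs
  rw [Measure.map_apply hm (MeasurableSet.univ_pi hs)]
  have : (fun (p : Fin 4 → ℝ × ℝ) i => p (σ i)) ⁻¹' (Set.univ.pi s) =
      Set.univ.pi (fun i => s (σ.symm i)) := by
    ext p
    simp only [Set.mem_preimage, Set.mem_pi, Set.mem_univ, forall_true_left]
    constructor
    · intro h i
      simpa using h (σ.symm i)
    · intro h i
      have := h (σ i)
      rwa [Equiv.symm_apply_apply] at this
  rw [this, Measure.pi_pi]
  exact Equiv.prod_comp σ.symm (fun i => μ (s i))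

theorem EE_meas (π : Equiv.Perm (Fin 4)) : MeasurableSet (EE π) := by
  have : EE π = ⋃ σ : Equiv.Perm (Fin 4),
      (⋂ i : Fin 4, ⋂ j : Fin 4, ⋂ _ : i < j,
        {p : Fin 4 → ℝ × ℝ | (p (σ i)).1 < (p (σ j)).1}) ∩
      ⋂ i : Fin 4, ⋂ j : Fin 4,
        {p : Fin 4 → ℝ × ℝ | (p (σ i)).2 < (p (σ j)).2 ↔ π i < π j} := by
    ext p
    simp [EE, StrictMono]
  rw [this]
  refine MeasurableSet.iUnion fun σ => MeasurableSet.inter ?_ ?_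
  · refine MeasurableSet.iInter fun i => MeasurableSet.iInter fun j =>
      MeasurableSet.iInter fun _ => ?_
    exact measurableSet_lt (by fun_prop) (by fun_prop)
  · refine MeasurableSet.iInter fun i => MeasurableSet.iInter fun j => ?_
    have h : MeasurableSet {p : Fin 4 → ℝ × ℝ | (p (σ i)).2 < (p (σ j)).2} :=
      measurableSet_lt (by fun_prop) (by fun_prop)
    by_cases hπ : π i < π j
    · simpa [hπ] using h
    · have h' : MeasurableSet {p : Fin 4 → ℝ × ℝ | (p (σ j)).2 ≤ (p (σ i)).2} :=
        measurableSet_le (by fun_prop) (by fun_prop)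
      simpa [hπ] using h'

noncomputable def gr (p : Fin 4 → ℝ × ℝ) : ℝ := gk (fun i => (p i).1) (fun i => (p i).2)

theorem gr_meas : Measurable gr := by
  unfold gr gk
  push_cast
  have h1 : ∀ i j : Fin 4, MeasurableSet {p : Fin 4 → ℝ × ℝ | (p i).1 < (p j).1} := fun i j =>
      measurableSet_lt (by fun_prop) (by fun_prop)
  have h2 : ∀ i j : Fin 4, MeasurableSet {p : Fin 4 → ℝ × ℝ | (p i).2 < (p j).2} := fun i j =>
      measurableSet_lt (by fun_prop) (by fun_prop)
  refine Measurable.sub (Measurable.add (Measurable.sub ?_ ?_) ?_) measurable_const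
  · exact Measurable.const_mul (Measurable.ite ((h1 _ _).inter ((h2 _ _).inter ((h1 _ _).inter (h2 _ _))))
      measurable_const measurable_const) _
  · exact Measurable.const_mul (Measurable.ite ((h1 _ _).inter ((h2 _ _).inter ((h1 _ _).inter (h2 _ _))))
      measurable_const measurable_const) _
  · exact Measurable.const_mul (Measurable.ite ((h1 _ _).inter ((h2 _ _).inter ((h1 _ _).inter (h2 _ _))))
      measurable_const measurable_const) _

theorem gr_bound (p : Fin 4 → ℝ × ℝ) : ‖gr p‖ ≤ 100 := by
  unfold gr gk
  push_cast
  rw [Real.norm_eq_abs, abs_le]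
  split_ifs <;> norm_num

theorem sum_density (hμ : IsPermuton μ) :
    ∑ π ∈ SS, PermutonDensity π μ = ∫ p, gr p ∂(Measure.pi fun _ : Fin 4 => μ) := by
  have := hμ.1
  have h1 : ∀ π ∈ SS, PermutonDensity π μ =
      ∫ p, (EE π).indicator 1 p ∂(Measure.pi fun _ : Fin 4 => μ) := by
    intro π _
    rw [integral_indicator_one (EE_meas π)]
    rfl
  rw [Finset.sum_congr rfl h1, ← integral_finsetSum]
  swap
  · intro π _
    exact (integrable_const (1 : ℝ)).indicator (EE_meas π)
  have h2 : ∫ p, 24 * ∑ π ∈ SS, (EE π).indicator (1 : (Fin 4 → ℝ × ℝ) → ℝ) p ∂(Measure.pi fun _ : Fin 4 => μ) =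
      ∫ p, ∑ σ : Equiv.Perm (Fin 4), gr (fun i => p (σ i)) ∂(Measure.pi fun _ : Fin 4 => μ) := by
    apply integral_congr_ae
    filter_upwards [ae_inj _ measurable_fst hμ.map_fst, ae_inj _ measurable_snd hμ.map_snd] with p hx hy
    exact (pointwise p hx hy).symm
  have hi : Integrable gr (Measure.pi fun _ : Fin 4 => μ) :=
    Integrable.of_bound gr_meas.aestronglyMeasurable 100 (Eventually.of_forall gr_bound)
  have h3 : ∀ σ : Equiv.Perm (Fin 4), ∫ p, gr (fun i => p (σ i)) ∂(Measure.pi fun _ : Fin 4 => μ)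
      = ∫ p, gr p ∂(Measure.pi fun _ : Fin 4 => μ) := by
    intro σ
    conv_rhs => rw [← (pi_perm (μ := μ) σ).map_eq]
    rw [integral_map (pi_perm (μ := μ) σ).measurable.aemeasurable gr_meas.aestronglyMeasurable]
  rw [integral_const_mul, integral_finsetSum (Finset.univ : Finset (Equiv.Perm (Fin 4)))] at h2
  · simp only [h3, Finset.sum_const, Finset.card_univ, Fintype.card_perm, Fintype.card_fin] at h2
    simp [Nat.factorial] at h2
    linarith
  · intro σ _
    exact (pi_perm σ).integrable_comp_of_integrable hi

end perm

section main
variable {μ : Measure (ℝ × ℝ)}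

noncomputable def KK (z q : ℝ × ℝ) : ℝ := if q.1 < z.1 ∧ q.2 < z.2 then 1 else 0

noncomputable def FF (μ : Measure (ℝ × ℝ)) (z : ℝ × ℝ) : ℝ := ∫ q, KK z q ∂μ

theorem KK_meas : Measurable (fun w : (ℝ × ℝ) × (ℝ × ℝ) => KK w.1 w.2) := by
  unfold KK
  have h1 : MeasurableSet {w : (ℝ × ℝ) × (ℝ × ℝ) | w.2.1 < w.1.1} :=
    measurableSet_lt (by fun_prop) (by fun_prop)
  have h2 : MeasurableSet {w : (ℝ × ℝ) × (ℝ × ℝ) | w.2.2 < w.1.2} :=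
    measurableSet_lt (by fun_prop) (by fun_prop)
  exact Measurable.ite (h1.inter h2) measurable_const measurable_const

theorem KK_meas' {α : Type*} [MeasurableSpace α] {f g : α → ℝ × ℝ} (hf : Measurable f)
    (hg : Measurable g) : Measurable (fun a => KK (f a) (g a)) :=
  KK_meas.comp (hf.prodMk hg)

theorem KK_nonneg (z q : ℝ × ℝ) : 0 ≤ KK z q := by unfold KK; split_ifs <;> norm_num
theorem KK_le (z q : ℝ × ℝ) : KK z q ≤ 1 := by unfold KK; split_ifs <;> norm_num

theorem KK_int [IsProbabilityMeasure μ] (z : ℝ × ℝ) : Integrable (KK z) μ :=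
  Integrable.of_bound (KK_meas.comp measurable_prodMk_left).aestronglyMeasurable 1
    (Eventually.of_forall fun q => by
      rw [Real.norm_eq_abs, abs_of_nonneg (KK_nonneg _ _)]; exact KK_le _ _)

theorem FF_meas [IsProbabilityMeasure μ] : Measurable (FF μ) :=
  (KK_meas.stronglyMeasurable.integral_prod_right' (ν := μ)).measurable

theorem FF_nonneg (z : ℝ × ℝ) : 0 ≤ FF μ z := integral_nonneg (KK_nonneg z)

theorem FF_le [IsProbabilityMeasure μ] (z : ℝ × ℝ) : FF μ z ≤ 1 := by
  have := integral_mono (KK_int (μ := μ) z) (integrable_const (1 : ℝ)) (KK_le z)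
  simp only [integral_const, probReal_univ, smul_eq_mul, mul_one] at this
  exact this

theorem FF_eq (z : ℝ × ℝ) : FF μ z = μ.real (Set.Iio z.1 ×ˢ Set.Iio z.2) := by
  rw [← integral_indicator_one (measurableSet_Iio.prod measurableSet_Iio)]
  unfold FF
  congr 1
  ext q
  simp [KK, Set.indicator_apply]

/-- Integrability of bounded measurable functions with values in `[0,1]`. -/
theorem int01 {α : Type*} [MeasurableSpace α] {ν : Measure α} [IsProbabilityMeasure ν] {f : α → ℝ}
    (hf : Measurable f) (h0 : ∀ a, 0 ≤ f a) (h1 : ∀ a, f a ≤ 1) : Integrable f ν :=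
  Integrable.of_bound hf.aestronglyMeasurable 1
    (Eventually.of_forall fun q => by
      rw [Real.norm_eq_abs, abs_of_nonneg (h0 _)]; exact h1 _)

theorem fubini4 [IsProbabilityMeasure μ] (u : (ℝ × ℝ) × (ℝ × ℝ) → ℝ)
    (f h : (ℝ × ℝ) × (ℝ × ℝ) → ℝ × ℝ → ℝ)
    (hi : Integrable (fun z : ((ℝ × ℝ) × (ℝ × ℝ)) × ((ℝ × ℝ) × (ℝ × ℝ)) =>
      u z.1 * (f z.1 z.2.1 * h z.1 z.2.2)) ((μ.prod μ).prod (μ.prod μ))) :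
    ∫ z, u z.1 * (f z.1 z.2.1 * h z.1 z.2.2) ∂((μ.prod μ).prod (μ.prod μ)) =
      ∫ w, u w * ((∫ c, f w c ∂μ) * (∫ d, h w d ∂μ)) ∂(μ.prod μ) := by
  rw [integral_prod _ hi]
  congr 1
  ext w
  simp only
  rw [integral_const_mul, ← integral_prod_mul]

noncomputable def K1 (z q : ℝ × ℝ) : ℝ := if q.1 < z.1 then 1 else 0
noncomputable def K2 (z q : ℝ × ℝ) : ℝ := if q.2 < z.2 then 1 else 0

theorem K1_meas : Measurable (fun w : (ℝ × ℝ) × (ℝ × ℝ) => K1 w.1 w.2) := by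
  unfold K1
  exact Measurable.ite (measurableSet_lt (by fun_prop) (by fun_prop))
    measurable_const measurable_const
theorem K2_meas : Measurable (fun w : (ℝ × ℝ) × (ℝ × ℝ) => K2 w.1 w.2) := by
  unfold K2
  exact Measurable.ite (measurableSet_lt (by fun_prop) (by fun_prop))
    measurable_const measurable_const
theorem K1_meas' {α : Type*} [MeasurableSpace α] {f g : α → ℝ × ℝ} (hf : Measurable f)
    (hg : Measurable g) : Measurable (fun a => K1 (f a) (g a)) :=
  K1_meas.comp (hf.prodMk hg)
theorem K2_meas' {α : Type*} [MeasurableSpace α] {f g : α → ℝ × ℝ} (hf : Measurable f)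
    (hg : Measurable g) : Measurable (fun a => K2 (f a) (g a)) :=
  K2_meas.comp (hf.prodMk hg)
theorem K1_nonneg (z q : ℝ × ℝ) : 0 ≤ K1 z q := by unfold K1; split_ifs <;> norm_num
theorem K1_le (z q : ℝ × ℝ) : K1 z q ≤ 1 := by unfold K1; split_ifs <;> norm_num
theorem K2_nonneg (z q : ℝ × ℝ) : 0 ≤ K2 z q := by unfold K2; split_ifs <;> norm_num
theorem K2_le (z q : ℝ × ℝ) : K2 z q ≤ 1 := by unfold K2; split_ifs <;> norm_num

theorem int_K1 (hμ : IsPermuton μ) (z : ℝ × ℝ) : ∫ q, K1 z q ∂μ = LL z.1 := by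
  have : LL z.1 = ∫ x, (Set.Iio z.1).indicator 1 x ∂mm := by
    rw [integral_indicator_one measurableSet_Iio]; rfl
  rw [this, ← hμ.map_fst, integral_map measurable_fst.aemeasurable
    ((measurable_one.indicator measurableSet_Iio).aestronglyMeasurable)]
  congr 1

theorem int_K2 (hμ : IsPermuton μ) (z : ℝ × ℝ) : ∫ q, K2 z q ∂μ = LL z.2 := by
  have : LL z.2 = ∫ x, (Set.Iio z.2).indicator 1 x ∂mm := by
    rw [integral_indicator_one measurableSet_Iio]; rfl
  rw [this, ← hμ.map_snd, integral_map measurable_snd.aemeasurable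
    ((measurable_one.indicator measurableSet_Iio).aestronglyMeasurable)]
  congr 1

theorem gr_eq' (p : Fin 4 → ℝ × ℝ) : gr p =
    12 * (if (p 2).1 < (p 0).1 ∧ (p 2).2 < (p 0).2 ∧ (p 3).1 < (p 0).1 ∧ (p 3).2 < (p 0).2
      then 1 else 0) -
    24 * (if (p 1).1 < (p 0).1 ∧ (p 1).2 < (p 0).2 ∧ (p 2).1 < (p 0).1 ∧ (p 3).2 < (p 0).2
      then 1 else 0) +
    24 * (if (p 2).1 < (p 0).1 ∧ (p 2).2 < (p 1).2 ∧ (p 3).1 < (p 0).1 ∧ (p 3).2 < (p 1).2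
      then 1 else 0) - 1 := by
  unfold gr gk
  push_cast
  rfl

theorem gr_eq (a b c d : ℝ × ℝ) : gr ![a, b, c, d] =
    12 * (1 * (KK a c * KK a d)) - 24 * (KK a b * (K1 a c * K2 a d)) +
      24 * (1 * (KK (a.1, b.2) c * KK (a.1, b.2) d)) - 1 := by
  have h : ∀ (P Q : Prop) [Decidable P] [Decidable Q],
      ((if P then (1 : ℝ) else 0) * (if Q then 1 else 0)) = if P ∧ Q then 1 else 0 := by
    intro P Q _ _
    by_cases hP : P <;> by_cases hQ : Q <;> simp [hP, hQ]
  rw [gr_eq']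
  simp only [KK, K1, K2, h, one_mul]
  simp only [and_assoc]
  rfl

theorem density_eq (hμ : IsPermuton μ) :
    ∑ π ∈ SS, PermutonDensity π μ =
      12 * (∫ z, FF μ z ^ 2 ∂μ) - 24 * (∫ z, FF μ z * (LL z.1 * LL z.2) ∂μ) +
      24 * (∫ z, FF μ z ^ 2 ∂(mm.prod mm)) - 1 := by
  have := hμ.1
  have hm : Measurable (fun q : ((ℝ × ℝ) × (ℝ × ℝ)) × ((ℝ × ℝ) × (ℝ × ℝ)) =>
      ![q.1.1, q.1.2, q.2.1, q.2.2]) := by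
    rw [measurable_pi_iff]
    intro i
    fin_cases i <;> simp <;> fun_prop
  rw [sum_density hμ, pi_four, integral_map hm.aemeasurable gr_meas.aestronglyMeasurable]
  simp only [gr_eq]
  have i1 : Integrable (fun q : ((ℝ × ℝ) × (ℝ × ℝ)) × ((ℝ × ℝ) × (ℝ × ℝ)) =>
      (1 : ℝ) * (KK q.1.1 q.2.1 * KK q.1.1 q.2.2)) ((μ.prod μ).prod (μ.prod μ)) := by
    apply int01
    · have a1 : Measurable fun q : ((ℝ × ℝ) × (ℝ × ℝ)) × ((ℝ × ℝ) × (ℝ × ℝ)) =>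
        KK q.1.1 q.2.1 := KK_meas' (by fun_prop) (by fun_prop)
      have a2 : Measurable fun q : ((ℝ × ℝ) × (ℝ × ℝ)) × ((ℝ × ℝ) × (ℝ × ℝ)) =>
        KK q.1.1 q.2.2 := KK_meas' (by fun_prop) (by fun_prop)
      exact (a1.mul a2).const_mul 1
    · intro q
      exact mul_nonneg zero_le_one (mul_nonneg (KK_nonneg _ _) (KK_nonneg _ _))
    · intro q
      rw [one_mul]
      exact mul_le_one₀ (KK_le _ _) (KK_nonneg _ _) (KK_le _ _)
  have i2 : Integrable (fun q : ((ℝ × ℝ) × (ℝ × ℝ)) × ((ℝ × ℝ) × (ℝ × ℝ)) =>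
      KK q.1.1 q.1.2 * (K1 q.1.1 q.2.1 * K2 q.1.1 q.2.2)) ((μ.prod μ).prod (μ.prod μ)) := by
    apply int01
    · have a0 : Measurable fun q : ((ℝ × ℝ) × (ℝ × ℝ)) × ((ℝ × ℝ) × (ℝ × ℝ)) =>
        KK q.1.1 q.1.2 := KK_meas' (by fun_prop) (by fun_prop)
      have a1 : Measurable fun q : ((ℝ × ℝ) × (ℝ × ℝ)) × ((ℝ × ℝ) × (ℝ × ℝ)) =>
        K1 q.1.1 q.2.1 := K1_meas' (by fun_prop) (by fun_prop)
      have a2 : Measurable fun q : ((ℝ × ℝ) × (ℝ × ℝ)) × ((ℝ × ℝ) × (ℝ × ℝ)) =>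
        K2 q.1.1 q.2.2 := K2_meas' (by fun_prop) (by fun_prop)
      exact a0.mul (a1.mul a2)
    · intro q
      exact mul_nonneg (KK_nonneg _ _) (mul_nonneg (K1_nonneg _ _) (K2_nonneg _ _))
    · intro q
      exact mul_le_one₀ (KK_le _ _) (mul_nonneg (K1_nonneg _ _) (K2_nonneg _ _))
        (mul_le_one₀ (K1_le _ _) (K2_nonneg _ _) (K2_le _ _))
  have i3 : Integrable (fun q : ((ℝ × ℝ) × (ℝ × ℝ)) × ((ℝ × ℝ) × (ℝ × ℝ)) =>
      (1 : ℝ) * (KK (q.1.1.1, q.1.2.2) q.2.1 * KK (q.1.1.1, q.1.2.2) q.2.2))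
      ((μ.prod μ).prod (μ.prod μ)) := by
    apply int01
    · have a1 : Measurable fun q : ((ℝ × ℝ) × (ℝ × ℝ)) × ((ℝ × ℝ) × (ℝ × ℝ)) =>
        KK (q.1.1.1, q.1.2.2) q.2.1 := KK_meas' (by fun_prop) (by fun_prop)
      have a2 : Measurable fun q : ((ℝ × ℝ) × (ℝ × ℝ)) × ((ℝ × ℝ) × (ℝ × ℝ)) =>
        KK (q.1.1.1, q.1.2.2) q.2.2 := KK_meas' (by fun_prop) (by fun_prop)
      exact (a1.mul a2).const_mul 1
    · intro q
      exact mul_nonneg zero_le_one (mul_nonneg (KK_nonneg _ _) (KK_nonneg _ _))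
    · intro q
      rw [one_mul]
      exact mul_le_one₀ (KK_le _ _) (KK_nonneg _ _) (KK_le _ _)
  rw [integral_sub, integral_add, integral_sub, integral_const_mul 12, integral_const_mul 24,
    integral_const_mul 24,
    fubini4 (fun _ => 1) (fun w c => KK w.1 c) (fun w c => KK w.1 c) i1,
    fubini4 (fun w => KK w.1 w.2) (fun w c => K1 w.1 c) (fun w c => K2 w.1 c) i2,
    fubini4 (fun _ => 1) (fun w c => KK (w.1.1, w.2.2) c) (fun w c => KK (w.1.1, w.2.2) c) i3]
  rotate_left
  · exact i1.const_mul _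
  · exact i2.const_mul _
  · exact (i1.const_mul _).sub (i2.const_mul _)
  · exact i3.const_mul _
  · exact ((i1.const_mul _).sub (i2.const_mul _)).add (i3.const_mul _)
  · exact integrable_const _
  have e1 : ∫ w : (ℝ × ℝ) × (ℝ × ℝ), 1 * ((∫ c, KK w.1 c ∂μ) * ∫ d, KK w.1 d ∂μ) ∂(μ.prod μ) =
      ∫ z, FF μ z ^ 2 ∂μ := by
    have : ∀ w : (ℝ × ℝ) × (ℝ × ℝ), 1 * ((∫ c, KK w.1 c ∂μ) * ∫ d, KK w.1 d ∂μ) =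
      FF μ w.1 ^ 2 := fun w => by rw [FF]; ring
    simp only [this]
    rw [integral_fun_fst (μ := μ) (ν := μ) (fun z => FF μ z ^ 2)]
    simp
  have e2 : ∫ w : (ℝ × ℝ) × (ℝ × ℝ), KK w.1 w.2 * ((∫ c, K1 w.1 c ∂μ) * ∫ d, K2 w.1 d ∂μ)
      ∂(μ.prod μ) = ∫ z, FF μ z * (LL z.1 * LL z.2) ∂μ := by
    simp only [int_K1 hμ, int_K2 hμ]
    rw [integral_prod]
    · congr 1
      ext z
      simp only
      rw [integral_mul_const]
      rfl
    · apply int01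
      · exact KK_meas.mul ((LL_meas.comp (by fun_prop)).mul (LL_meas.comp (by fun_prop)))
      · intro q
        exact mul_nonneg (KK_nonneg _ _) (mul_nonneg (LL_nonneg _) (LL_nonneg _))
      · intro q
        exact mul_le_one₀ (KK_le _ _) (mul_nonneg (LL_nonneg _) (LL_nonneg _))
          (mul_le_one₀ (LL_le _) (LL_nonneg _) (LL_le _))
  have e3 : ∫ w : (ℝ × ℝ) × (ℝ × ℝ), 1 * ((∫ c, KK (w.1.1, w.2.2) c ∂μ) *
      ∫ d, KK (w.1.1, w.2.2) d ∂μ) ∂(μ.prod μ) = ∫ z, FF μ z ^ 2 ∂(mm.prod mm) := by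
    have : ∀ w : (ℝ × ℝ) × (ℝ × ℝ), 1 * ((∫ c, KK (w.1.1, w.2.2) c ∂μ) *
      ∫ d, KK (w.1.1, w.2.2) d ∂μ) = FF μ (Prod.map Prod.fst Prod.snd w) ^ 2 :=
        fun w => by rw [FF]; simp only [Prod.map]; ring
    simp only [this]
    have hp : mm.prod mm = (μ.prod μ).map (Prod.map Prod.fst Prod.snd) := by
      rw [← Measure.map_prod_map _ _ measurable_fst measurable_snd, hμ.map_fst, hμ.map_snd]
    rw [hp, integral_map (measurable_fst.prodMap measurable_snd).aemeasurable
      (FF_meas.pow_const 2).aestronglyMeasurable]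
  rw [e1, e2, e3]
  simp

end main

section final
variable {μ : Measure (ℝ × ℝ)}

noncomputable def dd (μ : Measure (ℝ × ℝ)) (z : ℝ × ℝ) : ℝ := FF μ z - LL z.1 * LL z.2

theorem LLL_meas : Measurable (fun z : ℝ × ℝ => LL z.1 * LL z.2) :=
  (LL_meas.comp measurable_fst).mul (LL_meas.comp measurable_snd)

theorem LLL_nonneg (z : ℝ × ℝ) : 0 ≤ LL z.1 * LL z.2 := mul_nonneg (LL_nonneg _) (LL_nonneg _)
theorem LLL_le (z : ℝ × ℝ) : LL z.1 * LL z.2 ≤ 1 := mul_le_one₀ (LL_le _) (LL_nonneg _) (LL_le _)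

theorem expand [IsProbabilityMeasure μ] (ν : Measure (ℝ × ℝ)) [IsProbabilityMeasure ν] :
    ∫ z, dd μ z ^ 2 ∂ν = (∫ z, FF μ z ^ 2 ∂ν) - 2 * (∫ z, FF μ z * (LL z.1 * LL z.2) ∂ν) +
      ∫ z, (LL z.1 * LL z.2) ^ 2 ∂ν := by
  have i1 : Integrable (fun z => FF μ z ^ 2) ν :=
    int01 (FF_meas.pow_const 2) (fun z => sq_nonneg _)
      (fun z => pow_le_one₀ (FF_nonneg z) (FF_le z))
  have i2 : Integrable (fun z => FF μ z * (LL z.1 * LL z.2)) ν :=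
    int01 (FF_meas.mul LLL_meas) (fun z => mul_nonneg (FF_nonneg z) (LLL_nonneg z))
      (fun z => mul_le_one₀ (FF_le z) (LLL_nonneg z) (LLL_le z))
  have i3 : Integrable (fun z : ℝ × ℝ => (LL z.1 * LL z.2) ^ 2) ν :=
    int01 (LLL_meas.pow_const 2) (fun z => sq_nonneg _)
      (fun z => pow_le_one₀ (LLL_nonneg z) (LLL_le z))
  have : ∀ z, dd μ z ^ 2 = FF μ z ^ 2 - 2 * (FF μ z * (LL z.1 * LL z.2)) + (LL z.1 * LL z.2) ^ 2 :=
    fun z => by rw [dd]; ring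
  simp only [this]
  rw [integral_add, integral_sub i1 (i2.const_mul 2), integral_const_mul 2]
  · exact i1.sub (i2.const_mul 2)
  · exact i3

theorem int_V : ∫ z : ℝ × ℝ, (LL z.1 * LL z.2) ^ 2 ∂(mm.prod mm) = 1 / 9 := by
  simp only [mul_pow]
  rw [integral_prod_mul (fun x => LL x ^ 2) (fun x => LL x ^ 2), int_LL_sq]
  norm_num

theorem int_U (hμ : IsPermuton μ) : ∫ z, FF μ z * (LL z.1 * LL z.2) ∂(mm.prod mm) =
    (1 / 3 + ∫ z, (LL z.1 * LL z.2) ^ 2 ∂μ) / 4 := by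
  have := hμ.1
  have e1 : ∀ z, FF μ z * (LL z.1 * LL z.2) = ∫ q, KK z q * (LL z.1 * LL z.2) ∂μ := by
    intro z
    rw [integral_mul_const]; rfl
  simp only [e1]
  rw [integral_integral_swap]
  swap
  · apply int01
    · exact KK_meas.mul (LLL_meas.comp measurable_fst)
    · intro w
      exact mul_nonneg (KK_nonneg _ _) (LLL_nonneg _)
    · intro w
      exact mul_le_one₀ (KK_le _ _) (LLL_nonneg _) (LLL_le _)
  have e2 : ∀ᵐ q ∂μ, ∫ z, KK z q * (LL z.1 * LL z.2) ∂(mm.prod mm) =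
      (1 - LL q.1 ^ 2 - LL q.2 ^ 2 + (LL q.1 * LL q.2) ^ 2) / 4 := by
    filter_upwards [hμ.ae_mem] with q hq
    have : ∀ z : ℝ × ℝ, KK z q * (LL z.1 * LL z.2) =
        (if q.1 < z.1 then LL z.1 else 0) * (if q.2 < z.2 then LL z.2 else 0) := by
      intro z
      unfold KK
      by_cases h1 : q.1 < z.1 <;> by_cases h2 : q.2 < z.2 <;> simp [h1, h2]
    simp only [this]
    rw [integral_prod_mul (fun x => if q.1 < x then LL x else 0)
      (fun x => if q.2 < x then LL x else 0), int_W hq.1, int_W hq.2]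
    ring
  rw [integral_congr_ae e2]
  have h1 : ∫ q : ℝ × ℝ, LL q.1 ^ 2 ∂μ = 1 / 3 := by
    rw [← int_LL_sq, ← hμ.map_fst, integral_map measurable_fst.aemeasurable
      (LL_meas.pow_const 2).aestronglyMeasurable]
  have h2 : ∫ q : ℝ × ℝ, LL q.2 ^ 2 ∂μ = 1 / 3 := by
    rw [← int_LL_sq, ← hμ.map_snd, integral_map measurable_snd.aemeasurable
      (LL_meas.pow_const 2).aestronglyMeasurable]
  have i1 : Integrable (fun q : ℝ × ℝ => LL q.1 ^ 2) μ :=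
    int01 ((LL_meas.comp measurable_fst).pow_const 2) (fun z => sq_nonneg _)
      (fun z => pow_le_one₀ (LL_nonneg _) (LL_le _))
  have i2 : Integrable (fun q : ℝ × ℝ => LL q.2 ^ 2) μ :=
    int01 ((LL_meas.comp measurable_snd).pow_const 2) (fun z => sq_nonneg _)
      (fun z => pow_le_one₀ (LL_nonneg _) (LL_le _))
  have i3 : Integrable (fun z : ℝ × ℝ => (LL z.1 * LL z.2) ^ 2) μ :=
    int01 (LLL_meas.pow_const 2) (fun z => sq_nonneg _)
      (fun z => pow_le_one₀ (LLL_nonneg z) (LLL_le z))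
  rw [integral_div, integral_add, integral_sub, integral_sub (integrable_const 1) i1, h1, h2]
  · simp
    ring
  · exact (integrable_const 1).sub i1
  · exact i2
  · exact ((integrable_const 1).sub i1).sub i2
  · exact i3

theorem key_identity (hμ : IsPermuton μ) :
    ∑ π ∈ SS, PermutonDensity π μ =
      1 / 3 + 12 * (∫ z, dd μ z ^ 2 ∂μ) + 24 * ∫ z, dd μ z ^ 2 ∂(mm.prod mm) := by
  have := hμ.1
  rw [density_eq hμ, expand μ, expand (mm.prod mm), int_U hμ, int_V]
  ring

theorem unif_eq : uniformPermuton = mm.prod mm := by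
  rw [uniformPermuton, mm, Measure.prod_restrict]
  rfl

theorem dd_unif (z : ℝ × ℝ) : dd (mm.prod mm) z = 0 := by
  rw [dd, FF_eq, measureReal_prod_prod, LL, LL, sub_self]

theorem FF_cont (hμ : IsPermuton μ) : Continuous (FF μ) := by
  have := hμ.1
  rw [continuous_iff_continuousAt]
  intro z
  unfold FF
  apply continuousAt_of_dominated (bound := fun _ => 1)
  · exact Eventually.of_forall fun w => (KK_int w).aestronglyMeasurable
  · refine Eventually.of_forall fun w => Eventually.of_forall fun q => ?_
    rw [Real.norm_eq_abs, abs_of_nonneg (KK_nonneg _ _)]; exact KK_le _ _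
  · exact integrable_const _
  · have h1 : ∀ᵐ q ∂μ, q.1 ≠ z.1 := by
      have : ∀ᵐ x ∂(μ.map Prod.fst), x ≠ z.1 := by
        rw [hμ.map_fst]; exact Measure.ae_ne _ _
      exact ae_of_ae_map measurable_fst.aemeasurable this
    have h2 : ∀ᵐ q ∂μ, q.2 ≠ z.2 := by
      have : ∀ᵐ x ∂(μ.map Prod.snd), x ≠ z.2 := by
        rw [hμ.map_snd]; exact Measure.ae_ne _ _
      exact ae_of_ae_map measurable_snd.aemeasurable this
    filter_upwards [h1, h2] with q hq1 hq2
    have c1 : ∀ᶠ w in nhds z, (q.1 < w.1 ↔ q.1 < z.1) := by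
      rcases lt_or_gt_of_ne hq1 with h | h
      · filter_upwards [continuous_fst.continuousAt.eventually_const_lt h] with w hw
        simp [hw, h]
      · filter_upwards [continuous_fst.continuousAt.eventually_lt_const h] with w hw
        exact iff_of_false (not_lt.2 hw.le) (not_lt.2 h.le)
    have c2 : ∀ᶠ w in nhds z, (q.2 < w.2 ↔ q.2 < z.2) := by
      rcases lt_or_gt_of_ne hq2 with h | h
      · filter_upwards [continuous_snd.continuousAt.eventually_const_lt h] with w hw
        simp [hw, h]
      · filter_upwards [continuous_snd.continuousAt.eventually_lt_const h] with w hw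
        exact iff_of_false (not_lt.2 hw.le) (not_lt.2 h.le)
    have : (fun w => KK w q) =ᶠ[nhds z] fun _ => KK z q := by
      filter_upwards [c1, c2] with w h1 h2
      simp only [KK, h1, h2]
    exact continuousAt_const.congr this.symm

theorem uniform_of_FF (hμ : IsPermuton μ)
    (h : ∀ x ∈ Set.Ioo (0 : ℝ) 1, ∀ y ∈ Set.Ioo (0 : ℝ) 1, FF μ (x, y) = LL x * LL y) :
    μ = mm.prod mm := by
  have := hμ.1
  have hfst : ∀ s, MeasurableSet s → μ (Prod.fst ⁻¹' s) = mm s := fun s hs => by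
    rw [← hμ.map_fst, Measure.map_apply measurable_fst hs]
  have hsnd : ∀ s, MeasurableSet s → μ (Prod.snd ⁻¹' s) = mm s := fun s hs => by
    rw [← hμ.map_snd, Measure.map_apply measurable_snd hs]
  have z0 : ∀ t : ℝ, t ≤ 0 → mm (Set.Iio t) = 0 := by
    intro t ht
    apply measure_mono_null _ ae_mm
    intro x hx hx'
    exact absurd (lt_of_lt_of_le hx ht) (not_lt.2 hx'.1)
  have z1 : ∀ t : ℝ, 1 ≤ t → mm (Set.Ici t) = 0 := by
    intro t ht
    have h1 : mm {(1 : ℝ)} = 0 := measure_singleton _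
    have h2 : mm (Set.Ioi (1 : ℝ)) = 0 := by
      apply measure_mono_null _ ae_mm
      intro x hx hx'
      exact absurd hx'.2 (not_le.2 hx)
    apply measure_mono_null _ (measure_union_null h1 h2)
    intro x hx
    rcases eq_or_lt_of_le (ht.trans hx) with h | h
    · left; exact h.symm
    · right; exact h
  have o1 : ∀ t : ℝ, 1 ≤ t → mm (Set.Iio t) = 1 := by
    intro t ht
    have := z1 t ht
    rw [← Set.compl_Iio] at this
    exact (prob_compl_eq_zero_iff measurableSet_Iio).1 this
  have all : ∀ x y : ℝ, μ (Set.Iio x ×ˢ Set.Iio y) = mm (Set.Iio x) * mm (Set.Iio y) := by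
    intro x y
    rcases le_or_gt x 0 with hx | hx
    · rw [z0 x hx, zero_mul]
      apply measure_mono_null (t := Prod.fst ⁻¹' (Set.Iio x)) (fun q hq => hq.1)
      rw [hfst _ measurableSet_Iio, z0 x hx]
    rcases le_or_gt y 0 with hy | hy
    · rw [z0 y hy, mul_zero]
      apply measure_mono_null (t := Prod.snd ⁻¹' (Set.Iio y)) (fun q hq => hq.2)
      rw [hsnd _ measurableSet_Iio, z0 y hy]
    rcases le_or_gt 1 x with hx1 | hx1
    · rw [o1 x hx1, one_mul, ← hsnd _ measurableSet_Iio]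
      have : ∀ᵐ q ∂μ, ¬ (q.1 ∈ Set.Ici x) := by
        rw [ae_iff]
        simp only [not_not]
        exact (hfst _ measurableSet_Ici).trans (z1 x hx1)
      apply measure_congr
      filter_upwards [this] with q hq
      apply propext
      exact ⟨fun h => h.2, fun h => ⟨Set.mem_Iio.2 (lt_of_not_ge fun h' => hq (Set.mem_Ici.2 h')), h⟩⟩
    rcases le_or_gt 1 y with hy1 | hy1
    · rw [o1 y hy1, mul_one, ← hfst _ measurableSet_Iio]
      have : ∀ᵐ q ∂μ, ¬ (q.2 ∈ Set.Ici y) := by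
        rw [ae_iff]
        simp only [not_not]
        exact (hsnd _ measurableSet_Ici).trans (z1 y hy1)
      apply measure_congr
      filter_upwards [this] with q hq
      apply propext
      exact ⟨fun h => h.1, fun h => ⟨h, Set.mem_Iio.2 (lt_of_not_ge fun h' => hq (Set.mem_Ici.2 h'))⟩⟩
    have := h x ⟨hx, hx1⟩ y ⟨hy, hy1⟩
    rw [FF_eq, LL, LL, measureReal_def, measureReal_def, measureReal_def, ← ENNReal.toReal_mul,
      ENNReal.toReal_eq_toReal_iff' (measure_ne_top _ _)
        (ENNReal.mul_ne_top (measure_ne_top _ _) (measure_ne_top _ _))] at this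
    exact this
  have gen : borel ℝ = MeasurableSpace.generateFrom (Set.range (Set.Iio : ℝ → Set ℝ)) :=
    borel_eq_generateFrom_Iio ℝ
  have span : IsCountablySpanning (Set.range (Set.Iio : ℝ → Set ℝ)) :=
    ⟨fun n : ℕ => Set.Iio (n : ℝ), fun n => ⟨_, rfl⟩, by
      rw [Set.eq_univ_iff_forall]
      intro x
      obtain ⟨n, hn⟩ := exists_nat_gt x
      exact Set.mem_iUnion.2 ⟨n, hn⟩⟩
  have gp := generateFrom_prod_eq span span
  rw [← gen, ← BorelSpace.measurable_eq (α := ℝ)] at gp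
  refine ext_of_generate_finite _ gp (isPiSystem_Iio.prod isPiSystem_Iio) ?_ (by simp)
  rintro _ ⟨_, ⟨x, rfl⟩, _, ⟨y, rfl⟩, rfl⟩
  rw [all, Measure.prod_prod]

theorem uniform_of_zero (hμ : IsPermuton μ) (h : ∫ z, dd μ z ^ 2 ∂(mm.prod mm) = 0) :
    μ = mm.prod mm := by
  have := hμ.1
  apply uniform_of_FF hμ
  have hd : Measurable (dd μ) := FF_meas.sub LLL_meas
  have hb : ∀ z, dd μ z ^ 2 ≤ 1 := by
    intro z
    have h1 := FF_nonneg (μ := μ) z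
    have h2 := FF_le (μ := μ) z
    have h3 := LLL_nonneg z
    have h4 := LLL_le z
    rw [sq_le_one_iff_abs_le_one, abs_le, dd]
    constructor <;> linarith
  rw [integral_eq_zero_iff_of_nonneg (fun z => sq_nonneg _)
    (int01 (hd.pow_const 2) (fun z => sq_nonneg _) hb)] at h
  have hU : IsOpen (Set.Ioo (0 : ℝ) 1 ×ˢ Set.Ioo (0 : ℝ) 1) := isOpen_Ioo.prod isOpen_Ioo
  have hle : (volume : Measure (ℝ × ℝ)).restrict (Set.Ioo (0 : ℝ) 1 ×ˢ Set.Ioo (0 : ℝ) 1) ≤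
      mm.prod mm := by
    rw [← unif_eq]
    exact Measure.restrict_mono (Set.prod_mono Set.Ioo_subset_Icc_self Set.Ioo_subset_Icc_self)
      le_rfl
  have hae : FF μ =ᵐ[(volume : Measure (ℝ × ℝ)).restrict
      (Set.Ioo (0 : ℝ) 1 ×ˢ Set.Ioo (0 : ℝ) 1)] fun z => z.1 * z.2 := by
    filter_upwards [hle.absolutelyContinuous.ae_le h, ae_restrict_mem hU.measurableSet] with z hz hm
    have : dd μ z = 0 := by simpa using hz
    rw [dd, LL_eq (Set.Ioo_subset_Icc_self hm.1), LL_eq (Set.Ioo_subset_Icc_self hm.2)] at this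
    linarith
  have he := Measure.eqOn_open_of_ae_eq hae hU (FF_cont hμ).continuousOn
    (continuous_fst.mul continuous_snd).continuousOn
  intro x hx y hy
  rw [he (show (x, y) ∈ _ from ⟨hx, hy⟩), LL_eq (Set.Ioo_subset_Icc_self hx),
    LL_eq (Set.Ioo_subset_Icc_self hy)]

theorem main_SS (hμ : IsPermuton μ) :
    (1 / 3 : ℝ) ≤ ∑ π ∈ SS, PermutonDensity π μ ∧
      (∑ π ∈ SS, PermutonDensity π μ = (1 / 3 : ℝ) ↔ μ = uniformPermuton) := by
  have := hμ.1
  have h1 : 0 ≤ ∫ z, dd μ z ^ 2 ∂μ := integral_nonneg fun z => sq_nonneg _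
  have h2 : 0 ≤ ∫ z, dd μ z ^ 2 ∂(mm.prod mm) := integral_nonneg fun z => sq_nonneg _
  rw [key_identity hμ]
  refine ⟨by linarith, fun h => ?_, fun h => ?_⟩
  · rw [unif_eq]
    exact uniform_of_zero hμ (by linarith)
  · rw [unif_eq] at h
    subst h
    simp [dd_unif]

end final

theorem statement_7 (μ : Measure (ℝ × ℝ)) (hμ : IsPermuton μ) :
    (1 / 3 : ℝ) ≤ ∑ π ∈ ({
        mk4 0 1 2 3,
        mk4 0 1 3 2,
        mk4 1 0 2 3,
        mk4 1 0 3 2,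
        mk4 2 3 0 1,
        mk4 2 3 1 0,
        mk4 3 2 0 1,
        mk4 3 2 1 0} : Finset (Equiv.Perm (Fin 4))), PermutonDensity π μ ∧
      (∑ π ∈ ({
        mk4 0 1 2 3,
        mk4 0 1 3 2,
        mk4 1 0 2 3,
        mk4 1 0 3 2,
        mk4 2 3 0 1,
        mk4 2 3 1 0,
        mk4 3 2 0 1,
        mk4 3 2 1 0} : Finset (Equiv.Perm (Fin 4))), PermutonDensity π μ = (1 / 3 : ℝ) ↔
        μ = uniformPermuton) := by
  exact main_SS hμ
end
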